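/- Let N ≥ 1 and k ≥ 0 be integers. There exists a constant C = C(k, N) > 0 such that for every compactly supported u ∈ H^1(ℝ^N), ‖u‖_{L^2} ≤ C ‖∇u‖_{L^2}^{1 - 1/2^k} ‖ |x|^{2^k - 1} u ‖_{L^2}^{1/2^k}. -/

import Mathlib

open MeasureTheory

lemma ckn_step (N : ℕ) (hN : 1 ≤ N) (n : ℕ) (u : EuclideanSpace ℝ (Fin N) → ℝ)
    (hu : ContDiff ℝ 1 u) (hc : HasCompactSupport u) :
    (∫ x, ‖x‖ ^ (2 * n) * (u x)^2) ≤
      2 * ((∫ x, ‖fderiv ℝ u x‖^2) ^ ((1:ℝ)/2) *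
        (∫ x, ‖x‖ ^ (2 * (2 * n + 1)) * (u x)^2) ^ ((1:ℝ)/2)) := by
  set v : EuclideanSpace ℝ (Fin N) := EuclideanSpace.single ⟨0, hN⟩ 1 with hv
  have hv1 : ‖v‖ = 1 := by simp [hv]
  let f : EuclideanSpace ℝ (Fin N) → ℝ := fun x => inner ℝ v x * (‖x‖^2)^n
  have hucont : Continuous u := hu.continuous
  have hf : ContDiff ℝ 1 f :=
    (contDiff_const.inner ℝ contDiff_id).mul ((contDiff_id.norm_sq ℝ).pow n)
  have hfd : ∀ x, fderiv ℝ f x v = (‖x‖^2)^n +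
      inner ℝ v x * (n * (‖x‖^2)^(n-1) * (2 * inner ℝ x v)) := by
    intro x
    have h1 : HasFDerivAt (fun x : EuclideanSpace ℝ (Fin N) => inner ℝ v x) (innerSL ℝ v) x :=
      (innerSL ℝ v).hasFDerivAt
    have h2 : HasFDerivAt (fun x : EuclideanSpace ℝ (Fin N) => ‖x‖^2) (2 • (innerSL ℝ x)) x :=
      (hasStrictFDerivAt_norm_sq x).hasFDerivAt
    have h3 := h1.mul (h2.pow n)
    have h4 := h3.fderiv
    change fderiv ℝ f x = _ at h4
    rw [h4]
    simp [hv1]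
    ring
  have hdu : Continuous (fderiv ℝ u) := hu.continuous_fderiv (by norm_num)
  have hdc : HasCompactSupport (fderiv ℝ u) := hc.fderiv ℝ
  have hu2 : ContDiff ℝ 1 (fun x => (u x)^2) := hu.pow 2
  have hu2c : HasCompactSupport (fun x => (u x)^2) := hc.comp_left (g := fun t : ℝ => t^2) (by simp)
  have hgd : ∀ x, fderiv ℝ (fun x => (u x)^2) x v = 2 * u x * fderiv ℝ u x v := by
    intro x
    have := ((hu.differentiable (by norm_num) x).hasFDerivAt.pow 2).fderiv
    rw [this]; simp
  have hdu2 : Continuous (fun x => fderiv ℝ (fun x => (u x)^2) x v) := by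
    simp_rw [hgd]; fun_prop
  have hdf : Continuous (fun x => fderiv ℝ f x v) :=
    (hf.continuous_fderiv (by norm_num)).clm_apply continuous_const
  have hdu2c : HasCompactSupport (fun x => fderiv ℝ (fun x => (u x)^2) x v) :=
    hu2c.fderiv_apply ℝ v
  have ibp := integral_mul_fderiv_eq_neg_fderiv_mul_of_integrable (μ := volume)
    (f := f) (g := fun x => (u x)^2) (v := v)
    ((hdf.mul hu2.continuous).integrable_of_hasCompactSupport hu2c.mul_left)
    ((hf.continuous.mul hdu2).integrable_of_hasCompactSupport hdu2c.mul_left)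
    ((hf.continuous.mul hu2.continuous).integrable_of_hasCompactSupport hu2c.mul_left)
    (fun x _ => hf.differentiable (by norm_num) x) (fun x _ => hu2.differentiable (by norm_num) x)
  have i1 : (∫ x, ‖x‖ ^ (2 * n) * (u x)^2) ≤ ∫ x, fderiv ℝ f x v * (u x)^2 := by
    apply integral_mono
    · exact ((continuous_norm.pow _).mul hu2.continuous).integrable_of_hasCompactSupport
        hu2c.mul_left
    · exact (hdf.mul hu2.continuous).integrable_of_hasCompactSupport hu2c.mul_left
    · intro x
      change ‖x‖ ^ (2 * n) * (u x)^2 ≤ fderiv ℝ f x v * (u x)^2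
      apply mul_le_mul_of_nonneg_right _ (sq_nonneg _)
      rw [hfd, real_inner_comm, pow_mul]
      have : 0 ≤ (n:ℝ) * (‖x‖^2)^(n-1) * (2 * (inner ℝ x v * inner ℝ x v)) :=
        mul_nonneg (by positivity) (mul_nonneg (by norm_num) (mul_self_nonneg _))
      nlinarith
  let F : EuclideanSpace ℝ (Fin N) → ℝ := fun x => ‖fderiv ℝ u x‖
  let H : EuclideanSpace ℝ (Fin N) → ℝ := fun x => ‖x‖^(2*n+1) * |u x|
  have hF : Continuous F := hdu.norm
  have hFc : HasCompactSupport F := hdc.norm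
  have hH : Continuous H := (continuous_norm.pow _).mul hucont.abs
  have hHc : HasCompactSupport H := (hc.norm : HasCompactSupport fun x => ‖u x‖).mul_left
  have i2 : (∫ x, fderiv ℝ f x v * (u x)^2) ≤ ∫ x, 2 * (F x * H x) := by
    rw [← neg_eq_iff_eq_neg.mpr ibp, ← integral_neg]
    apply integral_mono
    · exact ((hf.continuous.mul hdu2).integrable_of_hasCompactSupport hdu2c.mul_left).neg
    · exact ((hF.mul hH).integrable_of_hasCompactSupport hHc.mul_left).const_mul 2
    · intro x
      change -(f x * fderiv ℝ (fun x => (u x)^2) x v) ≤ 2 * (F x * H x)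
      refine (neg_le_abs _).trans ?_
      rw [hgd]
      have a1 : |inner ℝ v x| ≤ ‖x‖ := by
        simpa [hv1] using abs_real_inner_le_norm v x
      have a2 : |fderiv ℝ u x v| ≤ ‖fderiv ℝ u x‖ := by
        simpa [hv1] using (fderiv ℝ u x).le_opNorm v
      calc |f x * (2 * u x * fderiv ℝ u x v)|
          = 2 * (|fderiv ℝ u x v| * ((|inner ℝ v x| * (‖x‖^2)^n) * |u x|)) := by
            simp only [f, abs_mul, abs_pow, abs_norm, abs_two]; ring
        _ ≤ 2 * (‖fderiv ℝ u x‖ * ((‖x‖ * (‖x‖^2)^n) * |u x|)) := by gcongr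
        _ = 2 * (F x * H x) := by simp only [F, H]; ring
  have cs := integral_mul_le_Lp_mul_Lq_of_nonneg (μ := volume) (f := F) (g := H)
    (Real.HolderConjugate.two_two) (Filter.Eventually.of_forall fun x => norm_nonneg _)
    (Filter.Eventually.of_forall fun x => by positivity)
    (hF.memLp_of_hasCompactSupport hFc) (hH.memLp_of_hasCompactSupport hHc)
  have eH : (∫ x, H x ^ (2:ℝ)) = ∫ x, ‖x‖ ^ (2 * (2 * n + 1)) * (u x)^2 := by
    congr 1; ext x
    rw [Real.rpow_two]; simp only [H]; rw [mul_pow, sq_abs]; ring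
  have eF : (∫ x, F x ^ (2:ℝ)) = ∫ x, ‖fderiv ℝ u x‖ ^ 2 := by
    congr 1; ext x
    rw [Real.rpow_two]
  rw [eH, eF] at cs
  rw [integral_const_mul] at i2
  linarith

lemma ckn_exp (k : ℕ) : (2:ℝ) * ((2:ℝ)^k - 1) = ((2 * (2^k - 1) : ℕ) : ℝ) := by
  have : 1 ≤ 2^k := Nat.one_le_two_pow
  push_cast [this]; ring

theorem ckn_general (N : ℕ) (hN : 1 ≤ N) (k : ℕ) :
    ∃ C > 0, ∀ u : EuclideanSpace ℝ (Fin N) → ℝ,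
      ContDiff ℝ 1 u → HasCompactSupport u →
      (∫ x, (u x)^2) ^ ((1:ℝ)/2) ≤
        C * ((∫ x, ‖fderiv ℝ u x‖^2) ^ ((1:ℝ)/2)) ^ (1 - 1/(2:ℝ)^k) *
          ((∫ x, ‖x‖ ^ (2*((2:ℝ)^k - 1)) * (u x)^2) ^ ((1:ℝ)/2)) ^ (1/(2:ℝ)^k) := by
  induction k with
  | zero => exact ⟨1, one_pos, fun u _ _ => by simp⟩
  | succ k ih =>
    obtain ⟨C, hC, h⟩ := ih
    refine ⟨C * ((2:ℝ)^((1:ℝ)/2)) ^ (1/(2:ℝ)^k), by positivity, fun u hu hc => ?_⟩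
    refine (h u hu hc).trans ?_
    have s := ckn_step N hN (2^k - 1) u hu hc
    have e : 2 * (2^k - 1) + 1 = 2^(k+1) - 1 := by
      have : 1 ≤ 2^k := Nat.one_le_two_pow
      rw [pow_succ]; omega
    rw [e] at s
    simp only [ckn_exp, Real.rpow_natCast]
    set G := (∫ x, ‖fderiv ℝ u x‖^2) ^ ((1:ℝ)/2) with hG
    have hG0 : 0 ≤ G := Real.rpow_nonneg (integral_nonneg fun x => by positivity) _
    set B := (∫ x, ‖x‖ ^ (2 * (2^(k+1) - 1)) * (u x)^2) ^ ((1:ℝ)/2) with hB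
    have hB0 : 0 ≤ B := Real.rpow_nonneg (integral_nonneg fun x => by positivity) _
    have hA0 : 0 ≤ ∫ x, ‖x‖ ^ (2 * (2^k - 1)) * (u x)^2 :=
      integral_nonneg fun x => by positivity
    set A := ∫ x, ‖x‖ ^ (2 * (2^k - 1)) * (u x)^2
    set a : ℝ := 1/(2:ℝ)^k with ha
    have ha' : 1/(2:ℝ)^(k+1) = 1/2 * a := by rw [ha, pow_succ]; field_simp
    have ha0 : 0 ≤ a := by positivity
    have ha1 : a ≤ 1 := by
      rw [ha, div_le_one (by positivity)]; exact one_le_pow₀ (by norm_num)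
    rw [ha']
    calc C * G ^ (1 - a) * (A ^ ((1:ℝ)/2)) ^ a
        ≤ C * G ^ (1 - a) * ((2 * (G * B)) ^ ((1:ℝ)/2)) ^ a := by gcongr
      _ = C * ((2:ℝ)^((1:ℝ)/2)) ^ a * (G ^ (1 - a) * G ^ (1/2 * a)) * B ^ (1/2 * a) := by
          rw [Real.mul_rpow (by norm_num) (by positivity), Real.mul_rpow hG0 hB0,
            Real.mul_rpow (by positivity) (by positivity),
            Real.mul_rpow (by positivity) (by positivity),
            Real.rpow_mul hG0, Real.rpow_mul hB0]
          ring
      _ = C * ((2:ℝ)^((1:ℝ)/2)) ^ a * G ^ (1 - 1/2 * a) * B ^ (1/2 * a) := by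
          rw [← Real.rpow_add_of_nonneg hG0 (by linarith) (by positivity)]
          congr 3; ring
      _ ≤ _ := le_refl _
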